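/- arXiv:2604.20097 — 4 statements merged into one kernel-verified Lean document; each statement's English description precedes it below -/
import Mathlib

section
/- Let G be a finite simple connected graph and let S be a Carathéodory independent set of G with |S| ≥ 2. Then the subgraph of G induced by S is a forest containing at least one edge. -/
open SimpleGraph

/-- A set `S` is cycle convex in `G` if no vertex `w` outside `S` is such that the
subgraph induced by `S ∪ {w}` contains a cycle through `w`. -/
def IsCycleConvex {V : Type*} (G : SimpleGraph V) (S : Set V) : Prop :=
  ∀ w : V, w ∉ S →
    ¬ ∃ c : (G.induce (S ∪ {w})).Walk ⟨w, Set.mem_union_right S rfl⟩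
        ⟨w, Set.mem_union_right S rfl⟩, c.IsCycle

/-- The cycle convex hull of `S`: the smallest cycle convex set containing `S`. -/
def cycleHull {V : Type*} (G : SimpleGraph V) (S : Set V) : Set V :=
  ⋂₀ {T : Set V | S ⊆ T ∧ IsCycleConvex G T}

/-- `S` is Carathéodory independent in the cycle convexity of `G`. -/
def CIndep {V : Type*} (G : SimpleGraph V) (S : Set V) : Prop :=
  ∃ p ∈ cycleHull G S, ∀ a ∈ S, p ∉ cycleHull G (S \ {a})

/-- The Carathéodory number of `G` in the cycle convexity. -/
noncomputable def carNumber {V : Type*} (G : SimpleGraph V) : ℕ :=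
  sSup {n : ℕ | ∃ S : Set V, CIndep G S ∧ S.ncard = n}

/-! A vertex on a cycle of `G[S]` is regenerated in one step by the remaining vertices of `S`, so
deleting it leaves the hull unchanged; this is incompatible with Carathéodory independence.
A cycle through `w` has an edge avoiding `w`, so a set inducing no edge is cycle convex. A cycle
convex set is its own hull, so when Carathéodory independent it contains the witness `p`, which
already lies in the hull of `{p}`; hence it is `{p}`. -/

section CycleConvexity

variable {V : Type*} {G : SimpleGraph V} {S T : Set V}

theorem subset_cycleHull : S ⊆ cycleHull G S :=
  fun _ hx _ hT => hT.1 hx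

theorem IsCycleConvex.cycleHull_subset (hT : IsCycleConvex G T) (hST : S ⊆ T) :
    cycleHull G S ⊆ T :=
  Set.sInter_subset_of_mem ⟨hST, hT⟩

theorem cycleHull_subset_cycleHull (h : S ⊆ cycleHull G T) : cycleHull G S ⊆ cycleHull G T :=
  fun _ hp _ ⟨hTU, hU⟩ => hU.cycleHull_subset (h.trans (hU.cycleHull_subset hTU)) hp

theorem IsCycleConvex.mem_of_isCycle (hT : IsCycleConvex G T) {v : S}
    {c : (G.induce S).Walk v v} (hc : c.IsCycle) (hST : S \ {v.1} ⊆ T) : v.1 ∈ T := by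
  by_contra hvT
  have hS : S ⊆ T ∪ {v.1} := by
    rwa [Set.union_singleton, ← Set.sdiff_singleton_subset_iff]
  exact hT v.1 hvT ⟨c.map (G.induceHomOfLE hS).toHom, hc.map (G.induceHomOfLE hS).injective⟩

theorem mem_cycleHull_diff_singleton_of_isCycle {v : S} {c : (G.induce S).Walk v v}
    (hc : c.IsCycle) : v.1 ∈ cycleHull G (S \ {v.1}) :=
  fun _ ⟨hST, hT⟩ => hT.mem_of_isCycle hc hST

theorem exists_adj_ne_ne_of_isCycle {v : V} {c : G.Walk v v} (hc : c.IsCycle) :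
    ∃ x y, G.Adj x y ∧ x ≠ v ∧ y ≠ v := by
  have hlen : 3 ≤ c.length := hc.three_le_length
  refine ⟨c.getVert 1, c.getVert 2, c.adj_getVert_succ (by lia), ?_, ?_⟩ <;>
    · rw [Ne, hc.getVert_endpoint_iff (by lia)]
      lia

theorem isCycleConvex_of_isIndepSet (hS : G.IsIndepSet S) : IsCycleConvex G S := by
  rintro w - ⟨c, hc⟩
  obtain ⟨⟨x, hx⟩, ⟨y, hy⟩, hxy, hxw, hyw⟩ := exists_adj_ne_ne_of_isCycle hc
  have hxS : x ∈ S := hx.resolve_right fun h => hxw (Subtype.ext h)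
  have hyS : y ∈ S := hy.resolve_right fun h => hyw (Subtype.ext h)
  have hadj : G.Adj x y := hxy
  exact hS hxS hyS hadj.ne hadj

namespace CIndep

theorem notMem_cycleHull_diff_singleton (hS : CIndep G S) {a : V} (ha : a ∈ S) :
    a ∉ cycleHull G (S \ {a}) := by
  obtain ⟨p, hp, hpS⟩ := hS
  intro haS
  have hsub : S ⊆ cycleHull G (S \ {a}) := by
    rw [← Set.insert_eq_of_mem haS, ← Set.sdiff_singleton_subset_iff]
    exact subset_cycleHull
  exact hpS a ha (cycleHull_subset_cycleHull hsub hp)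

theorem isAcyclic_induce (hS : CIndep G S) : (G.induce S).IsAcyclic :=
  fun v _ hc =>
    hS.notMem_cycleHull_diff_singleton v.2 (mem_cycleHull_diff_singleton_of_isCycle hc)

theorem subsingleton_of_isCycleConvex (hS : CIndep G S) (hconv : IsCycleConvex G S) :
    S.Subsingleton := by
  obtain ⟨p, hp, hpS⟩ := hS
  have hp_mem : p ∈ S := hconv.cycleHull_subset subset_rfl hp
  refine Set.subsingleton_of_forall_eq p fun a ha => ?_
  by_contra hap
  exact hpS a ha (subset_cycleHull ⟨hp_mem, Ne.symm hap⟩)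

theorem exists_adj (hS : CIndep G S) (hnt : S.Nontrivial) : ∃ u ∈ S, ∃ v ∈ S, G.Adj u v := by
  by_contra! hindep
  have hconv : IsCycleConvex G S :=
    isCycleConvex_of_isIndepSet fun u hu v hv _ => hindep u hu v hv
  exact hnt.not_subsingleton (hS.subsingleton_of_isCycleConvex hconv)

end CIndep

end CycleConvexity

theorem stmt_0_general {V : Type*} (G : SimpleGraph V) (S : Set V) (hS : CIndep G S)
    (hnt : S.Nontrivial) :
    (G.induce S).IsAcyclic ∧ ∃ u ∈ S, ∃ v ∈ S, G.Adj u v :=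
  ⟨hS.isAcyclic_induce, hS.exists_adj hnt⟩

/-- Lemma 1(a)+(e): a Caratheodory independent set of size at least 2 in a finite
connected graph induces a forest containing at least one edge. -/
theorem stmt_0 {V : Type*} [Fintype V] (G : SimpleGraph V) (hG : G.Connected)
    (S : Set V) (hS : CIndep G S) (h2 : 2 ≤ S.ncard) :
    (G.induce S).IsAcyclic ∧ ∃ u ∈ S, ∃ v ∈ S, G.Adj u v :=
  stmt_0_general G S hS (Set.one_lt_ncard_iff_nontrivial.mp h2)
end

section
/- Let G be a finite simple connected graph with at least 3 vertices. If for every edge uv ∈ E(G) the set {u,v} is a hull set of G (i.e., hull({u,v}) = V(G)), then car(G) = 2. -/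
open SimpleGraph

/-!
An independent set is cycle convex, since adding one vertex to it induces a star plus isolated
vertices. A Carathéodory independent set that equals its own hull has at most one vertex, while one
containing an edge `uv` already has the hull of `{u, v}`, so it has no further vertex. Conversely,
the hull of an edge contains a third vertex, which lies in neither of the hulls of its endpoints.
-/

section

variable {V : Type*} {G : SimpleGraph V} {S T : Set V}

theorem cycleHull_mono (h : S ⊆ T) : cycleHull G S ⊆ cycleHull G T :=
  Set.sInter_subset_sInter fun _ hU => ⟨h.trans hU.1, hU.2⟩

theorem IsCycleConvex.cycleHull_eq (hS : IsCycleConvex G S) : cycleHull G S = S :=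
  Set.Subset.antisymm (Set.sInter_subset_of_mem ⟨subset_rfl, hS⟩) subset_cycleHull

theorem isCycleConvex_of_subsingleton (hS : S.Subsingleton) : IsCycleConvex G S :=
  isCycleConvex_of_isIndepSet (hS.pairwise _)

theorem cIndep_of_cycleHull_ne (hS : cycleHull G S ≠ S)
    (hdiff : ∀ a ∈ S, IsCycleConvex G (S \ {a})) : CIndep G S := by
  obtain ⟨p, hp, hpS⟩ := Set.exists_of_ssubset (subset_cycleHull.ssubset_of_ne hS.symm)
  refine ⟨p, hp, fun a ha hpa => hpS ?_⟩
  rw [(hdiff a ha).cycleHull_eq] at hpa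
  exact hpa.1

theorem cIndep_pair {u v : V} (h : cycleHull G {u, v} ≠ {u, v}) : CIndep G {u, v} := by
  refine cIndep_of_cycleHull_ne h fun a ha => isCycleConvex_of_subsingleton ?_
  rintro x ⟨hx, hxa⟩ y ⟨hy, hya⟩
  grind

theorem CIndep.subsingleton (h : CIndep G S) (hS : IsCycleConvex G S) : S.Subsingleton := by
  obtain ⟨p, hp, hmin⟩ := h
  rw [hS.cycleHull_eq] at hp
  refine Set.subsingleton_of_forall_eq p fun a ha => by_contra fun hap => ?_
  exact hmin a ha (subset_cycleHull ⟨hp, Ne.symm hap⟩)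

theorem CIndep.eq_of_subset (hS : CIndep G S) (hTS : T ⊆ S)
    (hhull : cycleHull G S ⊆ cycleHull G T) : T = S := by
  obtain ⟨p, hp, hmin⟩ := hS
  refine hTS.antisymm fun a ha => by_contra fun haT => ?_
  exact hmin a ha (cycleHull_mono (Set.subset_sdiff_singleton hTS haT) (hhull hp))

theorem CIndep.encard_le_two (hhull : ∀ u v : V, G.Adj u v → cycleHull G {u, v} = Set.univ)
    (hS : CIndep G S) : S.encard ≤ 2 := by
  by_cases hind : G.IsIndepSet S
  · have hsub : S.Subsingleton := hS.subsingleton (isCycleConvex_of_isIndepSet hind)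
    exact (Set.encard_le_one_iff_subsingleton.mpr hsub).trans one_le_two
  · obtain ⟨u, hu, v, hv, huv⟩ : ∃ u ∈ S, ∃ v ∈ S, G.Adj u v := by
      by_contra! h
      exact hind fun x hx y hy _ => h x hx y hy
    have hpair : {u, v} = S :=
      hS.eq_of_subset (Set.pair_subset hu hv) (hhull u v huv ▸ Set.subset_univ _)
    exact hpair ▸ (Set.encard_pair huv.ne).le

end

theorem stmt_7_general {V : Type*} (G : SimpleGraph V) (hG : G ≠ ⊥) (hn : 3 ≤ ENat.card V)
    (hhull : ∀ u v : V, G.Adj u v → cycleHull G {u, v} = Set.univ) :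
    carNumber G = 2 := by
  refine IsGreatest.csSup_eq ⟨?_, ?_⟩
  · obtain ⟨u, v, huv⟩ := ne_bot_iff_exists_adj.mp hG
    refine ⟨{u, v}, cIndep_pair ?_, Set.ncard_pair huv.ne⟩
    rw [hhull u v huv]
    intro huniv
    rw [← Set.encard_univ, huniv, Set.encard_pair huv.ne] at hn
    exact absurd hn (by decide)
  · rintro _ ⟨S, hS, rfl⟩
    exact ENat.toNat_le_of_le_natCast (hS.encard_le_two hhull)

/-- Proposition 2(b): if every edge of a finite connected graph on at least 3
vertices is a hull set, then its Caratheodory number is 2. -/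
theorem stmt_7 {V : Type*} [Fintype V] (G : SimpleGraph V) (hG : G.Connected)
    (hn : 3 ≤ Fintype.card V)
    (hhull : ∀ u v : V, G.Adj u v → cycleHull G {u, v} = Set.univ) :
    carNumber G = 2 := by
  have : Nontrivial V := Fintype.one_lt_card_iff_nontrivial.mp (by lia)
  exact stmt_7_general G (fun h => not_connected_bot (h ▸ hG)) (by simpa using hn) hhull
end

section
/- Let G and H be finite simple connected graphs, each with at least two vertices, and let S ⊆ V(G □ H). If P is a path in the subgraph of G □ H induced by S, then π_G(V(P)) × π_H(V(P)) ⊆ hull(S), where hull denotes the cycle convex hull in G □ H. -/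
open SimpleGraph

/-!
If `x ~ x'` in `G` and `y ~ y'` in `H`, the four vertices with coordinates in `{x, x'} × {y, y'}`
form a 4-cycle of `G □ H`, so a cycle convex set containing three of them contains the fourth.
Along a walk, such squares form a ladder: if the walk, projected to the fiber over `x'`, stays in
the set, then so does its projection to the fiber over `x`, as soon as its first vertex does.
By induction on the walk, one ladder per edge in the `G` direction, the set contains `(a.1, v.2)`
for the first vertex `a` and every vertex `v` of a walk inside it. For a connected set this is
enough, since any of its vertices can be taken as `a`.
-/

namespace IsCycleConvex

section

variable {V : Type*} {G : SimpleGraph V} {T : Set V}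

lemma mem_of_isCycle_s16 (hT : IsCycleConvex G T) {w : V} {c : G.Walk w w} (hc : c.IsCycle)
    (hcT : ∀ v ∈ c.support, v ≠ w → v ∈ T) : w ∈ T := by
  by_contra hw
  have hsupp : ∀ v ∈ c.support, v ∈ T ∪ {w} := fun v hv =>
    (eq_or_ne v w).elim Or.inr fun hne => Or.inl (hcT v hv hne)
  refine hT w hw ⟨c.induce _ hsupp, .of_map (f := (Embedding.induce _).toHom) ?_⟩
  rwa [Walk.map_induce]

lemma mem_of_four_cycle (hT : IsCycleConvex G T) {a b c w : V} (ha : a ∈ T) (hb : b ∈ T)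
    (hc : c ∈ T) (hwa : G.Adj w a) (hab : G.Adj a b) (hbc : G.Adj b c) (hcw : G.Adj c w)
    (hac : a ≠ c) : w ∈ T := by
  rcases eq_or_ne w b with rfl | hwb
  · exact hb
  have hpath : (Walk.cons hab (.cons hbc (.cons hcw .nil))).IsPath := by
    simp [Walk.cons_isPath_iff, hab.ne, hac, hwa.ne', hbc.ne, hwb.symm, hcw.ne]
  have hcycle : (Walk.cons hwa (.cons hab (.cons hbc (.cons hcw .nil)))).IsCycle := by
    refine (Walk.cons_isCycle_iff _ hwa).2 ⟨hpath, ?_⟩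
    simp [hwa.ne, hwb, hac, hcw.ne']
  exact hT.mem_of_isCycle_s16 hcycle (by simp [ha, hb, hc])

end

variable {α β : Type*} {G : SimpleGraph α} {H : SimpleGraph β} {T : Set (α × β)}

lemma mem_of_boxProd_square (hT : IsCycleConvex (G □ H) T) {x x' : α} {y y' : β}
    (hx : G.Adj x x') (hy : H.Adj y y') (hxy : (x, y) ∈ T) (hx'y : (x', y) ∈ T)
    (hx'y' : (x', y') ∈ T) : (x, y') ∈ T :=
  hT.mem_of_four_cycle hxy hx'y hx'y' (boxProd_adj_right.2 hy.symm) (boxProd_adj_left.2 hx)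
    (boxProd_adj_right.2 hy) (boxProd_adj_left.2 hx.symm) (by simp [hx.ne])

lemma mk_snd_mem_of_adj (hT : IsCycleConvex (G □ H) T) {x x' : α} (hx : G.Adj x x')
    {a b : α × β} (p : (G □ H).Walk a b) (ha : (x, a.2) ∈ T)
    (hp : ∀ v ∈ p.support, (x', v.2) ∈ T) : ∀ v ∈ p.support, (x, v.2) ∈ T := by
  induction p with
  | nil => simpa using ha
  | @cons a c b hac q ih =>
    simp only [Walk.support_cons, List.mem_cons, forall_eq_or_imp] at hp ⊢
    obtain ⟨ha', hq⟩ := hp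
    have hc : (x, c.2) ∈ T := by
      rcases boxProd_adj.1 hac with ⟨-, hsnd⟩ | ⟨hadj, -⟩
      · rwa [← hsnd]
      · exact hT.mem_of_boxProd_square hx hadj ha ha' (hq c q.start_mem_support)
    exact ⟨ha, ih hc hq⟩

lemma mk_fst_snd_mem_of_walk (hT : IsCycleConvex (G □ H) T) {a b : α × β}
    (p : (G □ H).Walk a b) (hp : ∀ v ∈ p.support, v ∈ T) :
    ∀ v ∈ p.support, (a.1, v.2) ∈ T := by
  induction p with
  | nil => simpa using hp
  | @cons a c b hac q ih =>
    simp only [Walk.support_cons, List.mem_cons, forall_eq_or_imp] at hp ⊢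
    obtain ⟨ha, hq⟩ := hp
    refine ⟨ha, ?_⟩
    rcases boxProd_adj.1 hac with ⟨hadj, hsnd⟩ | ⟨-, hfst⟩
    · exact hT.mk_snd_mem_of_adj hadj q (hsnd ▸ ha) (ih hq)
    · rw [hfst]
      exact ih hq

lemma fst_image_prod_snd_image_subset (hT : IsCycleConvex (G □ H) T) {C : Set (α × β)}
    (hC : ((G □ H).induce C).Preconnected) (hCT : C ⊆ T) :
    (Prod.fst '' C) ×ˢ (Prod.snd '' C) ⊆ T := by
  rintro ⟨_, _⟩ ⟨⟨u, hu, rfl⟩, ⟨v, hv, rfl⟩⟩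
  obtain ⟨p⟩ := hC ⟨u, hu⟩ ⟨v, hv⟩
  let q : (G □ H).Walk u v := p.map (Embedding.induce C).toHom
  have hq : ∀ w ∈ q.support, w ∈ T := by
    intro w hw
    obtain ⟨z, -, rfl⟩ := List.mem_map.1 (Walk.support_map _ p ▸ hw)
    exact hCT z.2
  exact hT.mk_fst_snd_mem_of_walk q hq v q.end_mem_support

end IsCycleConvex

theorem stmt_16_general {α β : Type*} {G : SimpleGraph α} {H : SimpleGraph β}
    {S C : Set (α × β)} (hC : ((G □ H).induce C).Preconnected) (hCS : C ⊆ S) :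
    (Prod.fst '' C) ×ˢ (Prod.snd '' C) ⊆ cycleHull (G □ H) S :=
  Set.subset_sInter fun _ ⟨hST, hT⟩ => hT.fst_image_prod_snd_image_subset hC (hCS.trans hST)

/-- If P is a path in the subgraph of G □ H induced by S, then the product of the
projections of its vertex set is contained in the cycle convex hull of S. -/
theorem stmt_16 {α β : Type*} [Fintype α] [Fintype β]
    (G : SimpleGraph α) (H : SimpleGraph β)
    (hG : G.Connected) (hH : H.Connected)
    (hα : 2 ≤ Fintype.card α) (hβ : 2 ≤ Fintype.card β)
    (S : Set (α × β)) (a b : α × β) (p : (G □ H).Walk a b)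
    (hp : p.IsPath) (hsupp : ∀ v ∈ p.support, v ∈ S) :
    (Prod.fst '' {v | v ∈ p.support}) ×ˢ (Prod.snd '' {v | v ∈ p.support}) ⊆
      cycleHull (G □ H) S :=
  stmt_16_general p.connected_induce_support.preconnected hsupp
end

section
/- Let G and H be finite simple connected graphs, each with at least two vertices, and let S be a cycle convex subset of V(G □ H) whose induced subgraph is connected. Then (1) S = π_G(S) × π_H(S), and (2) π_G(S) is cycle convex in G and π_H(S) is cycle convex in H. -/
open SimpleGraph

/-!
For a set inducing a connected subgraph, cycle convexity amounts to P₃-convexity: a path inside the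
set between two neighbours of `w` closes up to a cycle through `w`. In `G □ H`, P₃-convexity lets a
walk lying in one row of `S` be pushed across an edge of `H` to the next row as soon as its starting
point is in `S` there, since each new vertex is adjacent to its copy in the old row and to the
previously pushed vertex. Following a walk of `S` from `y` to `x`, this gives a walk from `y.1` to
`x.1` in the row of `y`, so `(x.1, y.2) ∈ S`.
-/

/-- P₃-convexity: `S` contains every vertex that has two distinct neighbours in `S`. Unlike cycle
convexity, it is a local condition on adjacencies. -/
def IsP3Convex {V : Type*} (G : SimpleGraph V) (S : Set V) : Prop :=
  ∀ ⦃w a b : V⦄, a ∈ S → b ∈ S → a ≠ b → G.Adj w a → G.Adj w b → w ∈ S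

section General

variable {V W : Type*} {G : SimpleGraph V} {G' : SimpleGraph W} {S : Set V}

theorem isCycle_cons_concat {a b w : V} {p : G.Walk a b} (hp : p.IsPath) (hw : w ∉ p.support)
    (hab : a ≠ b) (hwa : G.Adj w a) (hbw : G.Adj b w) :
    (Walk.cons hwa (p.concat hbw)).IsCycle := by
  refine (Walk.cons_isCycle_iff _ _).2 ⟨hp.concat hw hbw, fun hmem => ?_⟩
  rw [Walk.edges_concat, List.concat_eq_append, List.mem_append, List.mem_singleton] at hmem
  rcases hmem with hmem | heq
  · exact hw (Walk.fst_mem_support_of_mem_edges _ hmem)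
  · rw [Sym2.eq_swap, Sym2.congr_left] at heq
    exact hab heq

theorem IsCycleConvex.isP3Convex (hS : IsCycleConvex G S) (hconn : (G.induce S).Preconnected) :
    IsP3Convex G S := by
  intro w a b ha hb hab hwa hwb
  by_contra hw
  obtain ⟨p, hp⟩ := (hconn ⟨a, ha⟩ ⟨b, hb⟩).exists_isPath
  let ι : G.induce S ↪g G.induce (S ∪ {w}) := induceHomOfLE G Set.subset_union_left
  have hw_support : ⟨w, Set.mem_union_right S rfl⟩ ∉ (p.map ι.toHom).support := by
    rw [Walk.support_map, List.mem_map]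
    rintro ⟨x, -, hx⟩
    have hxw : x.1 = w := congrArg Subtype.val hx
    exact hw (hxw ▸ x.2)
  exact hS w hw ⟨_, isCycle_cons_concat (hp.map ι.injective) hw_support
    (fun h => hab (congrArg Subtype.val h)) hwa hwb.symm⟩

namespace IsP3Convex

theorem isCycleConvex (hS : IsP3Convex G S) : IsCycleConvex G S := by
  rintro w hw ⟨c, hc⟩
  have mem_of_adj : ∀ x : ↥(S ∪ {w}), G.Adj w x → x.1 ∈ S := fun x hx =>
    x.2.resolve_right fun hxw => hx.ne (Set.mem_singleton_iff.1 hxw).symm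
  have hsnd : G.Adj w c.snd := c.adj_snd hc.not_nil
  have hpen : G.Adj w c.penultimate := (c.adj_penultimate hc.not_nil).symm
  exact hw (hS (mem_of_adj _ hsnd) (mem_of_adj _ hpen)
    (fun h => hc.snd_ne_penultimate (Subtype.ext h)) hsnd hpen)

theorem empty : IsP3Convex G ∅ :=
  fun _ _ _ ha => ha.elim

theorem preimage {T : Set W} (hT : IsP3Convex G' T) (f : G →g G') (hf : Function.Injective f) :
    IsP3Convex G (f ⁻¹' T) :=
  fun _ _ _ ha hb hab hwa hwb => hT ha hb (hf.ne hab) (f.map_adj hwa) (f.map_adj hwb)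

end IsP3Convex

end General

namespace IsP3Convex

variable {α β : Type*} {G : SimpleGraph α} {H : SimpleGraph β}

theorem of_prod_left {A : Set α} {B : Set β} (h : IsP3Convex (G □ H) (A ×ˢ B))
    (hB : B.Nonempty) : IsP3Convex G A := by
  obtain ⟨b, hb⟩ := hB
  have := h.preimage (G.boxProdLeft H b).toHom (G.boxProdLeft H b).injective
  exact Set.mk_preimage_prod_left (s := A) hb ▸ this

theorem of_prod_right {A : Set α} {B : Set β} (h : IsP3Convex (G □ H) (A ×ˢ B))
    (hA : A.Nonempty) : IsP3Convex H B := by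
  obtain ⟨a, ha⟩ := hA
  have := h.preimage (G.boxProdRight H a).toHom (G.boxProdRight H a).injective
  exact Set.mk_preimage_prod_right (t := B) ha ▸ this

variable {S : Set (α × β)}

theorem forall_mem_support_of_adj (hS : IsP3Convex (G □ H) S) {b b' : β} (hb : H.Adj b' b)
    {a c : α} (p : G.Walk a c) (hp : ∀ u ∈ p.support, (u, b) ∈ S) (ha : (a, b') ∈ S) :
    ∀ u ∈ p.support, (u, b') ∈ S := by
  induction p with
  | nil => simpa only [Walk.support_nil, List.forall_mem_singleton] using ha
  | @cons a v c hav p ih =>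
    rw [Walk.support_cons, List.forall_mem_cons] at hp ⊢
    have hv : (v, b') ∈ S :=
      hS (hp.2 v p.start_mem_support) ha (fun h => hb.ne (congrArg Prod.snd h).symm)
        (boxProd_adj_right.2 hb) (boxProd_adj_left.2 hav.symm)
    exact ⟨ha, ih hp.2 hv⟩

theorem exists_walk_forall_mem_support (hS : IsP3Convex (G □ H) S) {y x : S}
    (p : ((G □ H).induce S).Walk y x) :
    ∃ q : G.Walk y.1.1 x.1.1, ∀ u ∈ q.support, (u, y.1.2) ∈ S := by
  induction p with
  | @nil y => exact ⟨.nil, by simp only [Walk.support_nil, List.forall_mem_singleton, y.2]⟩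
  | @cons y y' x hadj _ ih =>
    obtain ⟨q, hq⟩ := ih
    obtain ⟨⟨a, b⟩, hy⟩ := y
    obtain ⟨⟨a', b'⟩, hy'⟩ := y'
    rcases boxProd_adj.1 (induce_adj.1 hadj) with ⟨haa', rfl : b = b'⟩ | ⟨hbb', rfl : a = a'⟩
    · refine ⟨.cons haa' q, ?_⟩
      rw [Walk.support_cons, List.forall_mem_cons]
      exact ⟨hy, hq⟩
    · exact ⟨q, hS.forall_mem_support_of_adj hbb' q hq hy⟩

theorem eq_image_fst_prod_image_snd (hS : IsP3Convex (G □ H) S)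
    (hconn : ((G □ H).induce S).Preconnected) :
    S = (Prod.fst '' S) ×ˢ (Prod.snd '' S) := by
  refine Set.Subset.antisymm Set.subset_fst_image_prod_snd_image ?_
  rintro ⟨_, _⟩ ⟨⟨x, hx, rfl⟩, ⟨y, hy, rfl⟩⟩
  obtain ⟨p⟩ := hconn ⟨y, hy⟩ ⟨x, hx⟩
  obtain ⟨q, hq⟩ := hS.exists_walk_forall_mem_support p
  exact hq x.1 q.end_mem_support

end IsP3Convex

theorem stmt_17_general {α β : Type*} (G : SimpleGraph α) (H : SimpleGraph β)
    (S : Set (α × β)) (hconv : IsCycleConvex (G □ H) S)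
    (hconn : ((G □ H).induce S).Preconnected) :
    S = (Prod.fst '' S) ×ˢ (Prod.snd '' S) ∧
      IsCycleConvex G (Prod.fst '' S) ∧ IsCycleConvex H (Prod.snd '' S) := by
  have hS : IsP3Convex (G □ H) S := hconv.isP3Convex hconn
  have hprod := hS.eq_image_fst_prod_image_snd hconn
  refine ⟨hprod, ?_⟩
  rcases S.eq_empty_or_nonempty with rfl | hne
  · simp only [Set.image_empty, IsP3Convex.empty.isCycleConvex, and_self]
  · rw [hprod] at hS
    exact ⟨(hS.of_prod_left (hne.image _)).isCycleConvex,
      (hS.of_prod_right (hne.image _)).isCycleConvex⟩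

/-- A cycle convex set of G □ H inducing a connected subgraph is the product of
its projections, and its projections are cycle convex in the factors. -/
theorem stmt_17 {α β : Type*} [Fintype α] [Fintype β]
    (G : SimpleGraph α) (H : SimpleGraph β)
    (hG : G.Connected) (hH : H.Connected)
    (hα : 2 ≤ Fintype.card α) (hβ : 2 ≤ Fintype.card β)
    (S : Set (α × β)) (hconv : IsCycleConvex (G □ H) S)
    (hconn : ((G □ H).induce S).Connected) :
    S = (Prod.fst '' S) ×ˢ (Prod.snd '' S) ∧
      IsCycleConvex G (Prod.fst '' S) ∧ IsCycleConvex H (Prod.snd '' S) :=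
  stmt_17_general G H S hconv hconn.preconnected
end
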